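/- Let (E,d_E) be a separable metric space, let p ≥ 1, let μ ∈ 𝒫_p(E) and let k ∈ ℕ ∪ {0}. Then b_{2^k,p}(μ)^p ≤ 2 · ∑_{j=0}^{k} inf_{q ∈ [p,∞)} 2^{(p/q − 1)(k − j)} · e_{2^j,q}(μ)^p. -/

import Mathlib

open MeasureTheory ENNReal Filter

noncomputable section

/-- The `p`-Wasserstein distance between two measures on a metric space, as an
extended nonnegative real: the infimum over all couplings `γ` (measures on `E × E`
with the prescribed marginals) of `(∫ d(x,y)^p dγ)^(1/p)`. -/
def Wp {E : Type*} [MetricSpace E] [MeasurableSpace E] (p : ℝ) (μ ν : Measure E) : ℝ≥0∞ :=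
  ⨅ γ ∈ {γ : Measure (E × E) | γ.map Prod.fst = μ ∧ γ.map Prod.snd = ν},
    (∫⁻ z, edist z.1 z.2 ^ p ∂γ) ^ (1 / p)

/-- The (uniform) discrete measure `(1/n) ∑ δ_{X i}`. -/
def empiricalMeasure {E : Type*} [MeasurableSpace E] (n : ℕ) (X : Fin n → E) : Measure E :=
  (n : ℝ≥0∞)⁻¹ • ∑ i, Measure.dirac (X i)

/-- The law of `n` independent samples of `μ`. -/
def sampleMeasure {E : Type*} [MeasurableSpace E] (μ : Measure E) (n : ℕ) :
    Measure (Fin n → E) :=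
  Measure.pi fun _ => μ

/-- `𝔼[W_p(μ_n, μ)]`, where `μ_n` is the empirical measure of `μ` with sample size `n`. -/
def expWp {E : Type*} [MetricSpace E] [MeasurableSpace E] (p : ℝ) (μ : Measure E) (n : ℕ) :
    ℝ≥0∞ :=
  ∫⁻ X, Wp p (empiricalMeasure n X) μ ∂(sampleMeasure μ n)

/-- `(𝔼[W_p(μ_n, μ)^p])^{1/p}`, where `μ_n` is the empirical measure of `μ` with
sample size `n`. -/
def expWpPow {E : Type*} [MetricSpace E] [MeasurableSpace E] (p : ℝ) (μ : Measure E) (n : ℕ) :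
    ℝ≥0∞ :=
  (∫⁻ X, (Wp p (empiricalMeasure n X) μ) ^ p ∂(sampleMeasure μ n)) ^ (1 / p)

/-- The optimal uniform quantization error
`b_{n,p}(μ) = inf_{x₁,…,x_n} W_p(μ, (1/n) ∑ δ_{x_i})`. -/
def unifQuantErr {E : Type*} [MetricSpace E] [MeasurableSpace E] (p : ℝ) (n : ℕ)
    (μ : Measure E) : ℝ≥0∞ :=
  ⨅ x : Fin n → E, Wp p μ (empiricalMeasure n x)

/-- The optimal quantization error `e_{n,p}(μ)`: the infimum of `W_p(μ, ν)` over all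
probability measures `ν` supported on at most `n` points. -/
def quantErr {E : Type*} [MetricSpace E] [MeasurableSpace E] (p : ℝ) (n : ℕ)
    (μ : Measure E) : ℝ≥0∞ :=
  ⨅ ν ∈ {ν : Measure E | IsProbabilityMeasure ν ∧
      ∃ S : Finset E, S.card ≤ n ∧ ν (↑S : Set E)ᶜ = 0}, Wp p μ ν

/-- `μ` has a finite `p`-th moment: `∫ d(x, x₀)^p dμ(x) < ∞` for some `x₀`. -/
def HasFiniteMoment {E : Type*} [MetricSpace E] [MeasurableSpace E] (p : ℝ)
    (μ : Measure E) : Prop :=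
  ∃ x₀ : E, ∫⁻ x, edist x x₀ ^ p ∂μ ≠ ∞

end

/-!
Let `N = 2 ^ k`. Cut space into the cells of a nearest-point map with at most `n` values, and in
each cell send the largest possible multiple of `1 / N` of the mass to the centre. What remains
weighs less than `1 / N` per cell, hence less than `n / N` in total, so by Hölder's inequality its
`p`-cost for the next, coarser map is bounded by a power of its small mass times a
`q`-quantization error. Running through `n = 2 ^ k, 2 ^ (k - 1), …, 1` exhausts the mass, as the
remaining mass is always a multiple of `1 / N`.
-/

open scoped Finset

section TransportCost

variable {E : Type*} [PseudoEMetricSpace E] [MeasurableSpace E]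

/-- The `p`-th power of the `p`-Wasserstein distance: the infimum of `∫ d(x,y)^p dγ` over the
couplings `γ` of `μ` and `ν`. It is `∞` if the total masses differ. -/
noncomputable def transportCost (p : ℝ) (μ ν : Measure E) : ℝ≥0∞ :=
  ⨅ γ ∈ {γ : Measure (E × E) | γ.map Prod.fst = μ ∧ γ.map Prod.snd = ν},
    ∫⁻ z, edist z.1 z.2 ^ p ∂γ

theorem transportCost_add_le (p : ℝ) (μ₁ μ₂ ν₁ ν₂ : Measure E) :
    transportCost p (μ₁ + μ₂) (ν₁ + ν₂) ≤ transportCost p μ₁ ν₁ + transportCost p μ₂ ν₂ := by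
  simp only [transportCost, ENNReal.iInf₂_add, ENNReal.add_iInf₂]
  refine le_iInf₂ fun γ₂ hγ₂ => le_iInf₂ fun γ₁ hγ₁ => ?_
  refine iInf₂_le_of_le (γ₁ + γ₂) ⟨?_, ?_⟩ (lintegral_add_measure _ _ _).le
  · rw [Measure.map_add _ _ measurable_fst, hγ₁.1, hγ₂.1]
  · rw [Measure.map_add _ _ measurable_snd, hγ₁.2, hγ₂.2]

theorem transportCost_map_le (p : ℝ) (μ : Measure E) {T : E → E} (hT : Measurable T) :
    transportCost p μ (μ.map T) ≤ ∫⁻ x, edist x (T x) ^ p ∂μ := by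
  have hgraph : Measurable fun x => (x, T x) := measurable_id.prodMk hT
  refine iInf₂_le_of_le (μ.map fun x => (x, T x)) ⟨?_, ?_⟩ (lintegral_map_le _ _)
  · rw [Measure.map_map measurable_fst hgraph]
    exact Measure.map_id
  · rw [Measure.map_map measurable_snd hgraph]
    rfl

theorem measure_univ_eq_of_transportCost_ne_top {p : ℝ} {μ ν : Measure E}
    (h : transportCost p μ ν ≠ ∞) : μ Set.univ = ν Set.univ := by
  contrapose! h
  refine iInf₂_eq_top.2 fun γ hγ => absurd ?_ h
  rw [← hγ.1, ← hγ.2, Measure.map_apply measurable_fst .univ,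
    Measure.map_apply measurable_snd .univ, Set.preimage_univ, Set.preimage_univ]

theorem Wp_rpow {E : Type*} [MetricSpace E] [MeasurableSpace E] {p : ℝ} (hp : 0 < p)
    (μ ν : Measure E) : Wp p μ ν ^ p = transportCost p μ ν := by
  rw [Wp, transportCost, ← ENNReal.orderIsoRpow_apply p hp]
  simp only [OrderIso.map_iInf, ENNReal.orderIsoRpow_apply, ← ENNReal.rpow_mul,
    one_div_mul_cancel hp.ne', ENNReal.rpow_one]

end TransportCost

section AtomicMeasure

variable {α : Type*} [MeasurableSpace α]

/-- The sum of point masses, all of weight `c`, at the points of `M`. -/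
noncomputable def atomicMeasure (c : ℝ≥0∞) (M : Multiset α) : Measure α :=
  c • (M.map Measure.dirac).sum

theorem atomicMeasure_add (c : ℝ≥0∞) (M M' : Multiset α) :
    atomicMeasure c (M + M') = atomicMeasure c M + atomicMeasure c M' := by
  simp only [atomicMeasure, Multiset.map_add, Multiset.sum_add, smul_add]

theorem atomicMeasure_sum_replicate (c : ℝ≥0∞) (s : Finset α) (m : α → ℕ) :
    atomicMeasure c (∑ a ∈ s, Multiset.replicate (m a) a) =
      ∑ a ∈ s, (m a * c) • Measure.dirac a := by
  have hmap : Multiset.map Measure.dirac (∑ a ∈ s, Multiset.replicate (m a) a) =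
      ∑ a ∈ s, Multiset.replicate (m a) (Measure.dirac a) := by
    simpa only [Multiset.coe_mapAddMonoidHom, Multiset.map_replicate] using
      map_sum (Multiset.mapAddMonoidHom Measure.dirac) (fun a => Multiset.replicate (m a) a) s
  rw [atomicMeasure, hmap, Multiset.sum_sum, Finset.smul_sum]
  refine Finset.sum_congr rfl fun a _ => ?_
  rw [Multiset.sum_replicate, ← Nat.cast_smul_eq_nsmul ℝ≥0∞, smul_smul, mul_comm]

theorem atomicMeasure_univ (c : ℝ≥0∞) (M : Multiset α) :
    atomicMeasure c M Set.univ = M.card * c := by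
  have hsum : (M.map Measure.dirac).sum Set.univ = M.card := by
    induction M using Multiset.induction with
    | empty => simp
    | cons a M ih => simp [ih, add_comm]
  rw [atomicMeasure, Measure.smul_apply, hsum, smul_eq_mul, mul_comm]

theorem exists_empiricalMeasure_eq_atomicMeasure (M : Multiset α) :
    ∃ X : Fin M.card → α, empiricalMeasure M.card X = atomicMeasure (M.card : ℝ≥0∞)⁻¹ M := by
  obtain ⟨l, rfl⟩ := Quot.exists_rep M
  refine ⟨l.get, ?_⟩
  change _ • ∑ i, Measure.dirac (l.get i) = _ • (l.map Measure.dirac).sum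
  rw [← List.sum_ofFn, ← Function.comp_def, ← List.map_ofFn, List.ofFn_get]

end AtomicMeasure

section Rounding

theorem exists_nat_mul_le_lt {a c : ℝ≥0∞} (ha : a ≠ ∞) (hc0 : c ≠ 0) (hc : c ≠ ∞) :
    ∃ m : ℕ, m * c ≤ a ∧ a < (m + 1) * c := by
  lift a to NNReal using ha
  lift c to NNReal using hc
  have hcpos : 0 < c := pos_iff_ne_zero.2 (by exact_mod_cast hc0)
  refine ⟨⌊a / c⌋₊, ?_, ?_⟩
  · exact_mod_cast (le_div_iff₀ hcpos).1 (Nat.floor_le zero_le)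
  · exact_mod_cast (div_lt_iff₀ hcpos).1 (Nat.lt_floor_add_one (a / c))

theorem exists_fraction_mul_eq_nat_mul {a c : ℝ≥0∞} (ha : a ≠ ∞) (hc0 : c ≠ 0) (hc : c ≠ ∞) :
    ∃ (m : ℕ) (θ : ℝ≥0∞), θ ≤ 1 ∧ θ * a = m * c ∧ (1 - θ) * a < c := by
  obtain ⟨m, hma, ham⟩ := exists_nat_mul_le_lt ha hc0 hc
  have hθ : m * c / a * a = m * c :=
    ENNReal.div_mul_cancel' (fun h => by simpa [h] using hma) fun h => absurd h ha
  refine ⟨m, m * c / a, ENNReal.div_le_of_le_mul (by rwa [one_mul]), hθ, ?_⟩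
  rw [ENNReal.sub_mul fun _ _ => ha, one_mul, hθ]
  exact ENNReal.sub_lt_of_lt_add hma (by rwa [add_comm, ← add_one_mul])

variable {α β : Type*} [MeasurableSpace α]

theorem withDensity_comp_simpleFunc_fiber (ρ : Measure α) (T : SimpleFunc α β) (θ : β → ℝ≥0∞)
    (b : β) :
    ρ.withDensity (θ ∘ T) (T ⁻¹' {b}) = θ b * ρ (T ⁻¹' {b}) := by
  have hconst : ∀ x ∈ T ⁻¹' {b}, (θ ∘ T) x = θ b := fun x hx => congrArg θ hx
  rw [withDensity_apply _ (T.measurableSet_fiber b),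
    setLIntegral_congr_fun (T.measurableSet_fiber b) hconst, setLIntegral_const]

theorem exists_add_eq_map_eq_atomicMeasure [Nonempty α] [MeasurableSpace β]
    [MeasurableSingletonClass β] (ρ : Measure α) [IsFiniteMeasure ρ] (T : SimpleFunc α β) {c : ℝ≥0∞}
    (hc0 : c ≠ 0) (hc : c ≠ ∞) :
    ∃ (ρ₁ ρ₂ : Measure α) (M : Multiset β), ρ₁ + ρ₂ = ρ ∧ ρ₁.map T = atomicMeasure c M ∧
      ρ₂ Set.univ < #T.range * c := by
  choose m θ hθ_le hθ_mul hθ_rest using fun b =>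
    exists_fraction_mul_eq_nat_mul (measure_ne_top ρ (T ⁻¹' {b})) hc0 hc
  refine ⟨ρ.withDensity (θ ∘ T), ρ.withDensity ((fun b => 1 - θ b) ∘ T),
    ∑ b ∈ T.range, Multiset.replicate (m b) b, ?_, ?_, ?_⟩
  · have hθ_meas : Measurable (θ ∘ T) := (T.map θ).measurable
    have hsum : θ ∘ T + (fun b => 1 - θ b) ∘ T = 1 :=
      funext fun x => add_tsub_cancel_of_le (hθ_le (T x))
    rw [← withDensity_add_left hθ_meas, hsum, withDensity_one]
  · rw [(Measure.ae_mem_finset_iff_map_eq_sum_dirac T.aemeasurable).1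
      (.of_forall T.mem_range_self), atomicMeasure_sum_replicate]
    simp only [withDensity_comp_simpleFunc_fiber, hθ_mul]
  · rw [← T.sum_range_measure_preimage_singleton, ← nsmul_eq_mul, ← Finset.sum_const]
    have hrange : T.range.Nonempty := ⟨_, T.mem_range_self (Classical.arbitrary α)⟩
    refine ENNReal.sum_lt_sum_of_nonempty hrange fun b _ => ?_
    rw [withDensity_comp_simpleFunc_fiber]
    exact hθ_rest b

end Rounding

section AtomicTransportCost

variable {E : Type*} [PseudoEMetricSpace E] [MeasurableSpace E]

/-- The least `p`-cost of transporting `ρ` to a sum of point masses of weight `c`. It is `∞` unless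
the mass of `ρ` is a multiple of `c`. -/
noncomputable def atomicTransportCost (p : ℝ) (c : ℝ≥0∞) (ρ : Measure E) : ℝ≥0∞ :=
  ⨅ M : Multiset E, transportCost p ρ (atomicMeasure c M)

theorem atomicTransportCost_zero (p : ℝ) (c : ℝ≥0∞) :
    atomicTransportCost p c (0 : Measure E) = 0 := by
  refine nonpos_iff_eq_zero.1 (iInf_le_of_le 0 (iInf₂_le_of_le 0 ⟨by simp, ?_⟩ (by simp)))
  simp [atomicMeasure]

theorem atomicTransportCost_add_le (p : ℝ) (c : ℝ≥0∞) (ρ₁ ρ₂ : Measure E) (M : Multiset E) :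
    atomicTransportCost p c (ρ₁ + ρ₂) ≤
      transportCost p ρ₁ (atomicMeasure c M) + atomicTransportCost p c ρ₂ := by
  simp only [atomicTransportCost, ENNReal.add_iInf]
  refine le_iInf fun M' => iInf_le_of_le (M + M') ?_
  rw [atomicMeasure_add]
  exact transportCost_add_le p ρ₁ ρ₂ _ _

theorem unifQuantErr_rpow_le_atomicTransportCost {E : Type*} [MetricSpace E] [MeasurableSpace E]
    {p : ℝ} (hp : 0 < p) (n : ℕ) (μ : Measure E) [IsProbabilityMeasure μ] :
    unifQuantErr p n μ ^ p ≤ atomicTransportCost p (n : ℝ≥0∞)⁻¹ μ := by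
  refine le_iInf fun M => ?_
  by_cases htop : transportCost p μ (atomicMeasure (n : ℝ≥0∞)⁻¹ M) = ∞
  · exact htop ▸ le_top
  have hmass : (M.card : ℝ≥0∞) * (n : ℝ≥0∞)⁻¹ = 1 := by
    rw [← atomicMeasure_univ, ← measure_univ_eq_of_transportCost_ne_top htop, measure_univ]
  obtain rfl : M.card = n := by
    exact_mod_cast (ENNReal.eq_inv_of_mul_eq_one_left hmass).trans (inv_inv _)
  obtain ⟨X, hX⟩ := exists_empiricalMeasure_eq_atomicMeasure M
  rw [← hX, ← Wp_rpow hp]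
  exact ENNReal.rpow_le_rpow (iInf_le _ X) hp.le

end AtomicTransportCost

section SimpleQuantCost

variable {E : Type*} [PseudoEMetricSpace E] [MeasurableSpace E]

/-- The least `p`-cost of moving `ρ` along a measurable map with at most `n` values. For `p > 0` and
a probability measure this is the `p`-th power of the quantization error. -/
noncomputable def simpleQuantCost (p : ℝ) (n : ℕ) (ρ : Measure E) : ℝ≥0∞ :=
  ⨅ (T : SimpleFunc E E) (_ : #T.range ≤ n), ∫⁻ x, edist x (T x) ^ p ∂ρ

theorem simpleQuantCost_mono {p : ℝ} {n : ℕ} {ρ μ : Measure E} (h : ρ ≤ μ) :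
    simpleQuantCost p n ρ ≤ simpleQuantCost p n μ :=
  iInf₂_mono fun _ _ => lintegral_mono' h le_rfl

theorem exists_simpleFunc_nearest [OpensMeasurableSpace E] {S : Finset E} (hS : S.Nonempty) :
    ∃ T : SimpleFunc E E, (∀ x, T x ∈ S) ∧ ∀ x, ∀ s ∈ S, edist x (T x) ≤ edist x s := by
  obtain ⟨e, he⟩ := S.countable_toSet.exists_eq_range hS
  have hindex : ∀ s : S, ∃ k, e k = s := fun s => he.subset s.2
  choose index hindex using hindex
  refine ⟨SimpleFunc.nearestPt e (S.attach.sup index), fun x => ?_, fun x s hs => ?_⟩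
  · exact he.superset ⟨_, rfl⟩
  · have hbound := Finset.le_sup (f := index) (S.mem_attach ⟨s, hs⟩)
    have hle := SimpleFunc.edist_nearestPt_le e x hbound
    rwa [hindex, edist_comm, edist_comm s] at hle

theorem lintegral_rpow_le_measure_univ_rpow_mul {α : Type*} [MeasurableSpace α] {ρ : Measure α}
    {f : α → ℝ≥0∞} (hf : AEMeasurable f ρ) {p q : ℝ} (hp : 0 < p) (hpq : p ≤ q) :
    ∫⁻ x, f x ^ p ∂ρ ≤ ρ Set.univ ^ (1 - p / q) * (∫⁻ x, f x ^ q ∂ρ) ^ (p / q) := by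
  have hnorm := eLpNorm'_le_eLpNorm'_mul_rpow_measure_univ (μ := ρ) hp hpq hf.aestronglyMeasurable
  have hpow := ENNReal.rpow_le_rpow hnorm hp.le
  simp only [eLpNorm', enorm_eq_self, ENNReal.mul_rpow_of_nonneg _ _ hp.le, ← ENNReal.rpow_mul,
    one_div_mul_cancel hp.ne', ENNReal.rpow_one, sub_mul, one_div_mul_eq_div] at hpow
  rwa [mul_comm] at hpow

theorem simpleQuantCost_le_rpow_mul_rpow [OpensMeasurableSpace E] {p q : ℝ} (hp : 0 < p)
    (hpq : p ≤ q) (n : ℕ) {ρ : Measure E} {m : ℝ≥0∞} (hm0 : m ≠ 0) (hm : m ≠ ∞)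
    (hρm : ρ Set.univ ≤ m) :
    simpleQuantCost p n ρ ≤ m ^ (1 - p / q) * simpleQuantCost q n ρ ^ (p / q) := by
  have hq : 0 < q := hp.trans_le hpq
  have hexp : 0 ≤ 1 - p / q := sub_nonneg.2 ((div_le_one hq).2 hpq)
  have hpow0 : m ^ (1 - p / q) ≠ 0 := (ENNReal.rpow_pos hm0.pos hm).ne'
  have hpow : m ^ (1 - p / q) ≠ ∞ := ENNReal.rpow_ne_top_of_nonneg hexp hm
  rw [simpleQuantCost, simpleQuantCost, ← ENNReal.orderIsoRpow_apply (p / q) (div_pos hp hq)]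
  simp only [OrderIso.map_iInf, ENNReal.orderIsoRpow_apply, ENNReal.mul_iInf_of_ne hpow0 hpow]
  refine iInf₂_mono fun T _ => ?_
  have hmeas : Measurable fun x => edist x (T x) :=
    T.measurable_bind (fun y x => edist x y) fun _ => measurable_edist_left
  refine (lintegral_rpow_le_measure_univ_rpow_mul hmeas.aemeasurable hp hpq).trans ?_
  gcongr

theorem simpleQuantCost_le_quantErr_rpow {E : Type*} [MetricSpace E] [MeasurableSpace E]
    [OpensMeasurableSpace E] {q : ℝ} (hq : 0 < q) (n : ℕ) (μ : Measure E) :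
    simpleQuantCost q n μ ≤ quantErr q n μ ^ q := by
  rw [← ENNReal.rpow_inv_le_iff hq]
  refine le_iInf₂ fun ν ⟨_, S, hSn, hνS⟩ => ?_
  rw [ENNReal.rpow_inv_le_iff hq, Wp_rpow hq]
  refine le_iInf₂ fun γ hγ => ?_
  have hS : S.Nonempty := by
    rw [Finset.nonempty_iff_ne_empty]
    rintro rfl
    simp at hνS
  obtain ⟨T, hTS, hTmin⟩ := exists_simpleFunc_nearest hS
  have hrange : T.range ⊆ S := fun y hy => by
    obtain ⟨x, rfl⟩ := SimpleFunc.mem_range.1 hy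
    exact hTS x
  have hγS : ∀ᵐ z ∂γ, z.2 ∈ S := by
    rwa [← hγ.2, Measure.map_apply measurable_snd S.measurableSet.compl] at hνS
  refine iInf₂_le_of_le T ((Finset.card_le_card hrange).trans hSn) ?_
  calc ∫⁻ x, edist x (T x) ^ q ∂μ ≤ ∫⁻ z, edist z.1 (T z.1) ^ q ∂γ := by
        rw [← hγ.1]
        exact lintegral_map_le _ _
    _ ≤ ∫⁻ z, edist z.1 z.2 ^ q ∂γ := lintegral_mono_ae <| hγS.mono fun z hz =>
        ENNReal.rpow_le_rpow (hTmin z.1 z.2 hz) hq.le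

theorem simpleQuantCost_le_rpow_mul_quantErr_rpow {E : Type*} [MetricSpace E] [MeasurableSpace E]
    [OpensMeasurableSpace E] {p q : ℝ} (hp : 0 < p) (hpq : p ≤ q) (n : ℕ) {ρ μ : Measure E}
    (hρμ : ρ ≤ μ) {m : ℝ≥0∞} (hm0 : m ≠ 0) (hm : m ≠ ∞) (hρm : ρ Set.univ ≤ m) :
    simpleQuantCost p n ρ ≤ m ^ (1 - p / q) * quantErr q n μ ^ p := by
  have hq : 0 < q := hp.trans_le hpq
  calc simpleQuantCost p n ρ ≤ m ^ (1 - p / q) * simpleQuantCost q n ρ ^ (p / q) :=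
        simpleQuantCost_le_rpow_mul_rpow hp hpq n hm0 hm hρm
    _ ≤ m ^ (1 - p / q) * (quantErr q n μ ^ q) ^ (p / q) := by
        gcongr
        exact (simpleQuantCost_mono hρμ).trans (simpleQuantCost_le_quantErr_rpow hq n μ)
    _ = m ^ (1 - p / q) * quantErr q n μ ^ p := by
        rw [← ENNReal.rpow_mul, mul_div_cancel₀ _ hq.ne']

end SimpleQuantCost

section Multiscale

theorem atomicTransportCost_le_simpleQuantCost_add {E : Type*} [PseudoEMetricSpace E] [Nonempty E]
    [MeasurableSpace E] [MeasurableSingletonClass E] (p : ℝ) {c : ℝ≥0∞} (hc0 : c ≠ 0) (hc : c ≠ ∞)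
    {ρ : Measure E} {N : ℕ} (hN : ρ Set.univ = N * c) (n : ℕ) {B : ℝ≥0∞}
    (hB : ∀ ρ' ≤ ρ, ∀ N' < n, ρ' Set.univ = N' * c → atomicTransportCost p c ρ' ≤ B) :
    atomicTransportCost p c ρ ≤ simpleQuantCost p n ρ + B := by
  have hNc : N * c ≠ ∞ := ENNReal.mul_ne_top (ENNReal.natCast_ne_top N) hc
  have : IsFiniteMeasure ρ := ⟨hN ▸ hNc.lt_top⟩
  simp only [simpleQuantCost, ENNReal.iInf₂_add]
  refine le_iInf₂ fun T hT => ?_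
  obtain ⟨ρ₁, ρ₂, M, rfl, hmap, hρ₂⟩ := exists_add_eq_map_eq_atomicMeasure ρ T hc0 hc
  have hρ₁ : ρ₁ Set.univ = M.card * c := by
    rw [← atomicMeasure_univ, ← hmap, Measure.map_apply T.measurable .univ, Set.preimage_univ]
  have hMc : M.card * c ≠ ∞ := ENNReal.mul_ne_top (ENNReal.natCast_ne_top _) hc
  have hrest : ρ₂ Set.univ = (N - M.card : ℕ) * c := by
    rw [Measure.add_apply, hρ₁] at hN
    rw [ENNReal.natCast_sub, ENNReal.sub_mul fun _ _ => hc, ← hN, ENNReal.add_sub_cancel_left hMc]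
  have hfew : N - M.card < n := by
    rw [hrest, ENNReal.mul_lt_mul_iff_left hc0 hc] at hρ₂
    exact (Nat.cast_lt.1 hρ₂).trans_le hT
  calc atomicTransportCost p c (ρ₁ + ρ₂)
      ≤ transportCost p ρ₁ (ρ₁.map T) + atomicTransportCost p c ρ₂ :=
        hmap ▸ atomicTransportCost_add_le p c ρ₁ ρ₂ M
    _ ≤ ∫⁻ x, edist x (T x) ^ p ∂(ρ₁ + ρ₂) + B := by
        gcongr
        · exact (transportCost_map_le p ρ₁ T.measurable).trans
            (lintegral_mono' (Measure.le_add_right le_rfl) le_rfl)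
        · exact hB ρ₂ (Measure.le_add_left le_rfl) _ hfew hrest

variable {E : Type*} [MetricSpace E] [MeasurableSpace E] [OpensMeasurableSpace E]

theorem atomicTransportCost_le_sum_quantErr [Nonempty E] {p : ℝ} (hp : 0 < p) {c : ℝ≥0∞}
    (hc0 : c ≠ 0) (hc : c ≠ ∞) {n : ℕ → ℕ} (hn : n 0 = 1) {ρ μ : Measure E} (hρμ : ρ ≤ μ)
    {N j : ℕ} (hN : ρ Set.univ = N * c) (hNj : N < n j) :
    atomicTransportCost p c ρ ≤ ∑ i ∈ Finset.range j,
      ⨅ q ∈ Set.Ici p, (n (i + 1) * c) ^ (1 - p / q) * quantErr q (n i) μ ^ p := by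
  induction j generalizing ρ N with
  | zero =>
    obtain rfl : N = 0 := by lia
    obtain rfl : ρ = 0 := by simpa using hN
    exact (atomicTransportCost_zero p c).trans_le zero_le
  | succ j ih =>
    have hm0 : (n (j + 1) : ℝ≥0∞) * c ≠ 0 := mul_ne_zero (by exact_mod_cast hNj.ne_bot) hc0
    have hm : (n (j + 1) : ℝ≥0∞) * c ≠ ∞ := ENNReal.mul_ne_top (ENNReal.natCast_ne_top _) hc
    have hρm : ρ Set.univ ≤ n (j + 1) * c := by
      rw [hN]
      gcongr
    rw [Finset.sum_range_succ, add_comm]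
    refine (atomicTransportCost_le_simpleQuantCost_add p hc0 hc hN (n j)
      fun ρ' hρ' N' hN' hmass => ih (hρ'.trans hρμ) hmass hN').trans ?_
    gcongr
    exact le_iInf₂ fun q hq =>
      simpleQuantCost_le_rpow_mul_quantErr_rpow hp hq (n j) hρμ hm0 hm hρm

theorem unifQuantErr_rpow_le_sum_quantErr {p : ℝ} (hp : 0 < p) (μ : Measure E)
    [IsProbabilityMeasure μ] {n : ℕ → ℕ} (hn : n 0 = 1) {N j : ℕ} (hN : N ≠ 0) (hNj : N < n j) :
    unifQuantErr p N μ ^ p ≤ ∑ i ∈ Finset.range j,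
      ⨅ q ∈ Set.Ici p, (n (i + 1) / N : ℝ≥0∞) ^ (1 - p / q) * quantErr q (n i) μ ^ p := by
  have := nonempty_of_isProbabilityMeasure μ
  have hN0 : (N : ℝ≥0∞) ≠ 0 := by exact_mod_cast hN
  have hNtop : (N : ℝ≥0∞) ≠ ∞ := ENNReal.natCast_ne_top N
  have hmass : μ Set.univ = N * (N : ℝ≥0∞)⁻¹ := by
    rw [measure_univ, ENNReal.mul_inv_cancel hN0 hNtop]
  exact (unifQuantErr_rpow_le_atomicTransportCost hp N μ).trans
    (atomicTransportCost_le_sum_quantErr hp (ENNReal.inv_ne_zero.2 hNtop)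
      (ENNReal.inv_ne_top.2 hN0) hn le_rfl hmass hNj)

theorem two_pow_div_two_pow_rpow_le (k j : ℕ) {t : ℝ} (ht : 0 ≤ t) :
    ((2 ^ (j + 1) : ℕ) / (2 ^ k : ℕ) : ℝ≥0∞) ^ (1 - t) ≤
      2 * ENNReal.ofReal ((2 : ℝ) ^ ((t - 1) * ((k : ℝ) - (j : ℝ)))) := by
  have hbase : ((2 ^ (j + 1) : ℕ) / (2 ^ k : ℕ) : ℝ≥0∞) = 2 ^ ((j : ℝ) + 1 - k) := by
    rw [ENNReal.rpow_sub _ _ two_ne_zero ENNReal.ofNat_ne_top]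
    norm_cast
  calc ((2 ^ (j + 1) : ℕ) / (2 ^ k : ℕ) : ℝ≥0∞) ^ (1 - t)
      = 2 ^ ((1 - t) + (t - 1) * ((k : ℝ) - j)) := by
        rw [hbase, ← ENNReal.rpow_mul]
        ring_nf
    _ ≤ 2 ^ (1 + (t - 1) * ((k : ℝ) - j)) := by
        gcongr
        · exact one_le_two
        · linarith
    _ = 2 * ENNReal.ofReal (2 ^ ((t - 1) * ((k : ℝ) - j))) := by
        rw [ENNReal.rpow_add _ _ two_ne_zero ENNReal.ofNat_ne_top, ENNReal.rpow_one,
          ← ENNReal.ofReal_rpow_of_pos two_pos, ENNReal.ofReal_ofNat]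

theorem stmt_5_general {p : ℝ} (hp : 0 < p) (μ : Measure E) [IsProbabilityMeasure μ] (k : ℕ) :
    unifQuantErr p (2 ^ k) μ ^ p ≤
      2 * ∑ j ∈ Finset.range (k + 1),
        ⨅ q ∈ Set.Ici p,
          ENNReal.ofReal ((2 : ℝ) ^ ((p / q - 1) * ((k : ℝ) - (j : ℝ)))) *
            quantErr q (2 ^ j) μ ^ p := by
  refine (unifQuantErr_rpow_le_sum_quantErr hp μ (n := (2 ^ ·)) rfl (j := k + 1)
    (pow_ne_zero k two_ne_zero) (Nat.pow_lt_pow_succ one_lt_two)).trans ?_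
  rw [Finset.mul_sum]
  gcongr with j
  simp only [ENNReal.mul_iInf_of_ne two_ne_zero ENNReal.ofNat_ne_top, ← mul_assoc]
  refine iInf₂_mono fun q hq => ?_
  gcongr
  exact two_pow_div_two_pow_rpow_le k j (div_nonneg hp.le (hp.le.trans hq))

end Multiscale

/-- **Theorem (main3).** Let `(E, d_E)` be a separable metric space, `p ≥ 1`,
`μ ∈ 𝒫_p(E)` and `k ∈ ℕ ∪ {0}`. Then
`b_{2^k,p}(μ)^p ≤ 2 ∑_{j=0}^{k} inf_{q ∈ [p,∞)} 2^{(p/q − 1)(k−j)} e_{2^j,q}(μ)^p`. -/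
theorem stmt_5 {E : Type*} [MetricSpace E] [TopologicalSpace.SeparableSpace E]
    [MeasurableSpace E] [BorelSpace E]
    (p : ℝ) (hp : 1 ≤ p)
    (μ : Measure E) [IsProbabilityMeasure μ] (hμ : HasFiniteMoment p μ)
    (k : ℕ) :
    unifQuantErr p (2 ^ k) μ ^ p ≤
      2 * ∑ j ∈ Finset.range (k + 1),
        ⨅ q ∈ Set.Ici p,
          ENNReal.ofReal ((2 : ℝ) ^ ((p / q - 1) * ((k : ℝ) - (j : ℝ)))) *
            quantErr q (2 ^ j) μ ^ p := by
  exact stmt_5_general (zero_lt_one.trans_le hp) μ k
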